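/- Let K be a commutative semiring, let (P_X)_{X∈𝒳} be a proper algebraic system over (Δ ∪ 𝒳) with unique quasiregular solution (S_X)_{X∈𝒳}. Then for every X ∈ 𝒳 and every word w ∈ Δ*, (S_X, w) = ∑_{t ∈ Der(G_X, w)} wt(t), the sum of the weights of all derivation trees of w under the underlying grammar G_X. -/

import Mathlib

/-! ### Algebraic formal power series -/

section Algebraic

variable {K Δ : Type} [CommSemiring K]

open Classical in
/-- Given a family of series `(S_X)` and a word `u ∈ (Δ ∪ 𝒳)*`, the series
`u₁ S_{X₁} u₂ ⋯ u_k S_{X_k} u_{k+1}` obtained by substituting `S_X` for each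
variable `X` in `u` and taking Cauchy products. -/
noncomputable def wordSeries {X : Type} (S : X → List Δ → K) :
    List (Δ ⊕ X) → List Δ → K
  | [] => fun w => if w = [] then 1 else 0
  | (Sum.inl a) :: rest => fun w =>
      match w with
      | [] => 0
      | b :: w' => if b = a then wordSeries S rest w' else 0
  | (Sum.inr x) :: rest => fun w =>
      ∑ k ∈ Finset.range (w.length + 1),
        S x (w.take k) * wordSeries S rest (w.drop k)

/-- `(S_X)` is a solution of the algebraic system `(P_X)`. -/
def IsSolution {X : Type} (P : X → List (Δ ⊕ X) → K) (S : X → List Δ → K) : Prop :=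
  ∀ x w, S x w = ∑ᶠ u : List (Δ ⊕ X), P x u * wordSeries S u w

/-- A proper algebraic system: `(P_X, Y) = (P_X, ε) = 0` for all variables `X, Y`. -/
def IsProper {X : Type} (P : X → List (Δ ⊕ X) → K) : Prop :=
  ∀ x, P x [] = 0 ∧ ∀ y : X, P x [Sum.inr y] = 0

/-- `S : Δ* → K` is an algebraic formal power series: a component of the
(unique) quasiregular solution of a proper algebraic system with finitely
supported polynomials. -/
def IsAlgebraicSeries (K Δ : Type) [CommSemiring K] (S : List Δ → K) : Prop :=
  ∃ (X : Type) (_ : Fintype X) (P : X → List (Δ ⊕ X) → K) (Sol : X → List Δ → K),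
    (∀ x, (Function.support (P x)).Finite) ∧
    IsProper P ∧ IsSolution P Sol ∧ (∀ x, Sol x [] = 0) ∧
    ∃ x₀, ∀ w, S w = Sol x₀ w

end Algebraic
/-! ### Derivation trees of the underlying grammar of an algebraic system -/

mutual
  /-- Derivation trees: leaves are letters, inner nodes are labeled by a
  variable together with the right-hand side word; the children correspond to
  the symbols of that word. -/
  inductive DTree (Δ X : Type) : Type where
    | leaf : Δ → DTree Δ X
    | node : X → List (Δ ⊕ X) → DForest Δ X → DTree Δ X

  inductive DForest (Δ X : Type) : Type where
    | nil : DForest Δ X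
    | cons : DTree Δ X → DForest Δ X → DForest Δ X
end

namespace DForest

variable {Δ X : Type}

/-- The yield (frontier word) of a forest. -/
def yield : DForest Δ X → List Δ
  | .nil => []
  | .cons (.leaf a) f => a :: f.yield
  | .cons (.node _ _ f') f => f'.yield ++ f.yield
  termination_by f => sizeOf f

/-- The product of the weights `(P_Y, w)` of all inner nodes of a forest. -/
def wt {K : Type} [CommSemiring K] (P : X → List (Δ ⊕ X) → K) : DForest Δ X → K
  | .nil => 1
  | .cons (.leaf _) f => f.wt P
  | .cons (.node y w f') f => P y w * f'.wt P * f.wt P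
  termination_by f => sizeOf f

/-- The forest `f` matches the word `w : (Δ ∪ 𝒳)*`: the first components of the
labels of the trees of `f` read from left to right yield `w`, each tree being a
correct derivation tree of the grammar underlying `P`. -/
def Matches {K : Type} [Zero K] (P : X → List (Δ ⊕ X) → K) :
    DForest Δ X → List (Δ ⊕ X) → Prop
  | .nil, [] => True
  | .cons (.leaf b) f, (Sum.inl a) :: w => b = a ∧ Matches P f w
  | .cons (.node z' w' f') f, (Sum.inr z) :: w =>
      z' = z ∧ P z' w' ≠ 0 ∧ Matches P f' w' ∧ Matches P f w
  | _, _ => False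
  termination_by f _ => sizeOf f

end DForest

namespace DTree

variable {Δ X : Type}

/-- The yield of a derivation tree. -/
def yield : DTree Δ X → List Δ
  | .leaf a => [a]
  | .node _ _ f => f.yield

/-- The weight of a derivation tree: the product of `(P_Y, w)` over all inner
nodes (leaves have weight `1`). -/
def wt {K : Type} [CommSemiring K] (P : X → List (Δ ⊕ X) → K) : DTree Δ X → K
  | .leaf _ => 1
  | .node y w f => P y w * f.wt P

/-- Validity of a derivation tree w.r.t. the grammar underlying `P`. -/
def Valid {K : Type} [Zero K] (P : X → List (Δ ⊕ X) → K) : DTree Δ X → Prop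
  | .leaf _ => True
  | .node y w f => P y w ≠ 0 ∧ DForest.Matches P f w

/-- The root variable of a derivation tree. -/
def rootVar : DTree Δ X → Option X
  | .leaf _ => none
  | .node y _ _ => some y

end DTree

/-! For every variable `x`, the weights of the derivation trees with root `x`, summed over the trees
with a given yield, define a series. Splitting a tree at its root, and a forest at its first tree,
shows that these series solve the system, so they are its unique quasiregular solution. Both the
uniqueness and the finiteness of the set of trees with a given yield follow by induction on the
yield: in a right-hand side of length at least two, the other symbols contribute at least one
letter, so every variable contributes a strictly shorter word. -/

theorem finsum_mem_image2_of_mul {R α β γ : Type*} [NonUnitalNonAssocSemiring R] {s : Set α}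
    {t : Set β} (hs : s.Finite) (ht : t.Finite) {c : α → β → γ} (hc : Function.Injective2 c)
    {F : γ → R} {f : α → R} {g : β → R} (hF : ∀ a b, F (c a b) = f a * g b) :
    ∑ᶠ z ∈ Set.image2 c s t, F z = (∑ᶠ a ∈ s, f a) * ∑ᶠ b ∈ t, g b := by
  lift s to Finset α using hs
  lift t to Finset β using ht
  rw [← Set.image_uncurry_prod, finsum_mem_image hc.uncurry.injOn, ← Finset.coe_product]
  simp only [finsum_mem_coe_finset, Function.uncurry, hF, Finset.sum_mul_sum, Finset.sum_product]

section DerivationTrees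

variable {K Δ X : Type} [CommSemiring K] {P : X → List (Δ ⊕ X) → K}

theorem wordSeries_inl_cons_self (S : X → List Δ → K) (a : Δ) (u : List (Δ ⊕ X)) (w : List Δ) :
    wordSeries S (.inl a :: u) (a :: w) = wordSeries S u w := by
  simp [wordSeries]

theorem wordSeries_inl_cons_eq_zero (S : X → List Δ → K) {a : Δ} (u : List (Δ ⊕ X)) {w : List Δ}
    (hw : ∀ v, w ≠ a :: v) : wordSeries S (.inl a :: u) w = 0 := by
  rcases w with _ | ⟨b, w⟩
  · rfl
  · have hba : b ≠ a := fun h => hw w (h ▸ rfl)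
    simp [wordSeries, hba]

theorem wordSeries_eq_zero_of_length_lt {S : X → List Δ → K} (hS : ∀ x, S x [] = 0) :
    ∀ {u : List (Δ ⊕ X)} {w : List Δ}, w.length < u.length → wordSeries S u w = 0
  | .inl _ :: _, [], _ => rfl
  | .inl a :: u, b :: w, h => by
    have ih := wordSeries_eq_zero_of_length_lt hS (Nat.lt_of_succ_lt_succ h)
    simp [wordSeries, ih]
  | .inr x :: u, w, h => by
    refine Finset.sum_eq_zero fun k hk => ?_
    rcases k with _ | k
    · simp [hS]
    · have hlt : (w.drop (k + 1)).length < u.length := by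
        rw [Finset.mem_range] at hk
        rw [List.length_cons] at h
        rw [List.length_drop]
        omega
      rw [wordSeries_eq_zero_of_length_lt hS hlt, mul_zero]

theorem wordSeries_inr_cons {S : X → List Δ → K} (hS : ∀ x, S x [] = 0) (x : X)
    (u : List (Δ ⊕ X)) (w : List Δ) :
    wordSeries S (.inr x :: u) w =
      ∑ k ∈ Finset.Icc 1 (w.length - u.length), S x (w.take k) * wordSeries S u (w.drop k) := by
  refine (Finset.sum_subset (fun k hk => ?_) fun k hk hk' => ?_).symm
  · simp only [Finset.mem_Icc, Finset.mem_range] at hk ⊢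
    omega
  · rcases k with _ | k
    · simp [hS]
    · simp only [Finset.mem_Icc, Finset.mem_range] at hk hk'
      have hlt : (w.drop (k + 1)).length < u.length := by
        rw [List.length_drop]
        omega
      rw [wordSeries_eq_zero_of_length_lt hS hlt, mul_zero]

namespace IsProper

theorem ne_nil (hP : IsProper P) {x : X} {u : List (Δ ⊕ X)} (hu : P x u ≠ 0) : u ≠ [] :=
  fun h => hu (h ▸ (hP x).1)

theorem two_le_length (hP : IsProper P) {x y : X} {u : List (Δ ⊕ X)} (hu : P x u ≠ 0)
    (hy : .inr y ∈ u) : 2 ≤ u.length := by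
  rcases u with _ | ⟨s, _ | ⟨s', u⟩⟩
  · cases hy
  · exact absurd (List.mem_singleton.1 hy ▸ (hP x).2 y) hu
  · simp

/-- `k` is the length of the subword derived from `x`. Its bounds say that `x`, and every symbol of
`u`, derives a nonempty word; they make the recursion well-founded. -/
theorem induction (hP : IsProper P) {T : X → List Δ → Prop} {F : List (Δ ⊕ X) → List Δ → Prop}
    (var : ∀ x w, (∀ u, P x u ≠ 0 → F u w) → T x w)
    (nil : ∀ w, F [] w)
    (inl_cons : ∀ a u w, (∀ v, w = a :: v → F u v) → F (.inl a :: u) w)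
    (inr_cons : ∀ x u w, (∀ k ∈ Finset.Icc 1 (w.length - u.length),
      T x (w.take k) ∧ F u (w.drop k)) → F (.inr x :: u) w) :
    (∀ x w, T x w) ∧ ∀ u w, F u w := by
  have forest : ∀ u w, (∀ x v, .inr x ∈ u → v.length + u.length ≤ w.length + 1 → T x v) →
      F u w := by
    intro u
    induction u with
    | nil => exact fun w _ => nil w
    | cons s u ih =>
      intro w hT
      rcases s with a | x
      · refine inl_cons a u w ?_
        rintro v rfl
        refine ih v fun y v' hy hv' => hT y v' (List.mem_cons_of_mem _ hy) ?_
        simp only [List.length_cons]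
        omega
      · refine inr_cons x u w fun k hk => ?_
        rw [Finset.mem_Icc] at hk
        refine ⟨hT x _ List.mem_cons_self ?_,
          ih _ fun y v hy hv => hT y v (List.mem_cons_of_mem _ hy) ?_⟩
        · simp only [List.length_take, List.length_cons]
          omega
        · simp only [List.length_drop, List.length_cons] at hv ⊢
          omega
  have tree : ∀ n x (w : List Δ), w.length = n → T x w := by
    intro n
    induction n using Nat.strong_induction_on with
    | _ n ih =>
      rintro x w rfl
      refine var x w fun u hu => forest u w fun y v hy hv => ih v.length ?_ y v rfl
      have hu_len := hP.two_le_length hu hy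
      omega
  exact ⟨fun x w => tree _ x w rfl, fun u w => forest u w fun x v _ _ => tree _ x v rfl⟩

end IsProper

theorem IsSolution.eq_of_quasiregular {S S' : X → List Δ → K} (hP : IsProper P)
    (hS : IsSolution P S) (hS' : IsSolution P S') (hS0 : ∀ x, S x [] = 0)
    (hS0' : ∀ x, S' x [] = 0) : S = S' := by
  suffices ∀ x w, S x w = S' x w from funext₂ this
  refine (hP.induction (F := fun u w => wordSeries S u w = wordSeries S' u w) ?_ ?_ ?_ ?_).1
  · intro x w ih
    rw [hS x w, hS' x w]
    refine finsum_congr fun u => ?_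
    by_cases hu : P x u = 0
    · rw [hu, zero_mul, zero_mul]
    · rw [ih u hu]
  · exact fun w => rfl
  · intro a u w ih
    by_cases hw : ∃ v, w = a :: v
    · obtain ⟨v, rfl⟩ := hw
      simpa only [wordSeries_inl_cons_self] using ih v rfl
    · rw [not_exists] at hw
      rw [wordSeries_inl_cons_eq_zero S u hw, wordSeries_inl_cons_eq_zero S' u hw]
  · intro x u w ih
    rw [wordSeries_inr_cons hS0, wordSeries_inr_cons hS0']
    exact Finset.sum_congr rfl fun k hk => by rw [(ih k hk).1, (ih k hk).2]

theorem DForest.yield_cons (t : DTree Δ X) (f : DForest Δ X) :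
    (cons t f).yield = t.yield ++ f.yield := by
  cases t <;> simp [yield, DTree.yield]

theorem DForest.wt_cons (t : DTree Δ X) (f : DForest Δ X) : (cons t f).wt P = t.wt P * f.wt P := by
  cases t <;> simp [wt, DTree.wt]

theorem DForest.matches_nil_iff {f : DForest Δ X} : f.Matches P [] ↔ f = nil := by
  rcases f with _ | ⟨_ | _, _⟩ <;> simp [Matches]

theorem DForest.matches_inl_cons_iff {f : DForest Δ X} {a : Δ} {u : List (Δ ⊕ X)} :
    f.Matches P (.inl a :: u) ↔ ∃ g, f = cons (.leaf a) g ∧ g.Matches P u := by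
  rcases f with _ | ⟨_ | _, _⟩ <;> simp [Matches]

theorem DForest.matches_inr_cons_iff {f : DForest Δ X} {x : X} {u : List (Δ ⊕ X)} :
    f.Matches P (.inr x :: u) ↔
      ∃ t g, f = cons t g ∧ t.rootVar = some x ∧ t.Valid P ∧ g.Matches P u := by
  rcases f with _ | ⟨_ | _, _⟩ <;> simp [Matches, DTree.rootVar, DTree.Valid, and_assoc]

theorem DForest.Matches.length_le_length_yield (hP : IsProper P) {f : DForest Δ X}
    {u : List (Δ ⊕ X)} (hf : f.Matches P u) : u.length ≤ f.yield.length := by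
  fun_induction DForest.Matches P f u with
  | case1 => simp
  | case2 b f a u ih => simpa [DForest.yield] using ih hf.2
  | case3 y v f' f x u ih' ih =>
    obtain ⟨-, hv, hf', hf⟩ := hf
    have hv_pos := List.length_pos_iff.2 (hP.ne_nil hv)
    have hf'_len := ih' hf'
    have hf_len := ih hf
    simp only [DForest.yield, List.length_append, List.length_cons]
    omega
  | case4 => exact hf.elim

theorem DTree.Valid.length_yield_pos (hP : IsProper P) {t : DTree Δ X} (ht : t.Valid P) :
    0 < t.yield.length := by
  rcases t with a | ⟨y, u, f⟩
  · simp [DTree.yield]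
  · exact (List.length_pos_iff.2 (hP.ne_nil ht.1)).trans_le (ht.2.length_le_length_yield hP)

/-- The set `Der(G_x, w)` of derivation trees of `w` in the grammar underlying `P` with start
symbol `x`. -/
def derivationTrees (P : X → List (Δ ⊕ X) → K) (x : X) (w : List Δ) : Set (DTree Δ X) :=
  {t | t.rootVar = some x ∧ t.Valid P ∧ t.yield = w}

/-- The derivation forests of `w` whose sequence of roots is the sentential form `u`. -/
def derivationForests (P : X → List (Δ ⊕ X) → K) (u : List (Δ ⊕ X)) (w : List Δ) :
    Set (DForest Δ X) :=
  {f | f.Matches P u ∧ f.yield = w}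

theorem derivationTrees_eq_biUnion (x : X) (w : List Δ) :
    derivationTrees P x w =
      ⋃ u ∈ Function.support (P x), DTree.node x u '' derivationForests P u w := by
  ext t
  rcases t with a | ⟨y, u, f⟩
  · simp [derivationTrees, DTree.rootVar]
  · simp only [derivationTrees, derivationForests, DTree.rootVar, DTree.Valid, DTree.yield,
      Option.some.injEq, Set.mem_ofPred_eq, Set.mem_iUnion, Set.mem_image, Function.mem_support,
      DTree.node.injEq, exists_prop]
    constructor
    · rintro ⟨rfl, ⟨hu, hf⟩, hw⟩
      exact ⟨u, hu, f, ⟨hf, hw⟩, rfl, rfl, rfl⟩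
    · rintro ⟨_, hu, _, ⟨hf, hw⟩, rfl, rfl, rfl⟩
      exact ⟨rfl, ⟨hu, hf⟩, hw⟩

theorem derivationTrees_nil (hP : IsProper P) (x : X) : derivationTrees P x [] = ∅ :=
  Set.eq_empty_of_forall_notMem fun _ ⟨_, ht, hw⟩ =>
    (ht.length_yield_pos hP).ne' (List.length_eq_zero_iff.2 hw)

theorem derivationForests_nil_nil : derivationForests P [] [] = {.nil} := by
  ext f
  simp only [derivationForests, Set.mem_ofPred_eq, DForest.matches_nil_iff, Set.mem_singleton_iff,
    and_iff_left_iff_imp]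
  rintro rfl
  rw [DForest.yield]

theorem derivationForests_nil_cons (b : Δ) (w : List Δ) : derivationForests P [] (b :: w) = ∅ := by
  refine Set.eq_empty_of_forall_notMem ?_
  rintro f ⟨hf, hw⟩
  rw [DForest.matches_nil_iff.1 hf, DForest.yield] at hw
  cases hw

theorem derivationForests_inl_cons_self (a : Δ) (u : List (Δ ⊕ X)) (w : List Δ) :
    derivationForests P (.inl a :: u) (a :: w) =
      DForest.cons (.leaf a) '' derivationForests P u w := by
  ext f
  simp only [derivationForests, Set.mem_ofPred_eq, DForest.matches_inl_cons_iff, Set.mem_image]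
  constructor
  · rintro ⟨⟨g, rfl, hg⟩, hw⟩
    exact ⟨g, ⟨hg, by simpa [DForest.yield] using hw⟩, rfl⟩
  · rintro ⟨g, ⟨hg, rfl⟩, rfl⟩
    exact ⟨⟨g, rfl, hg⟩, by simp [DForest.yield]⟩

theorem derivationForests_inl_cons_eq_empty {a : Δ} (u : List (Δ ⊕ X)) {w : List Δ}
    (hw : ∀ v, w ≠ a :: v) : derivationForests P (.inl a :: u) w = ∅ := by
  refine Set.eq_empty_of_forall_notMem ?_
  rintro f ⟨hf, rfl⟩
  obtain ⟨g, rfl, -⟩ := DForest.matches_inl_cons_iff.1 hf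
  exact hw g.yield (by simp [DForest.yield])

theorem derivationForests_inr_cons (hP : IsProper P) (x : X) (u : List (Δ ⊕ X)) (w : List Δ) :
    derivationForests P (.inr x :: u) w =
      ⋃ k ∈ Finset.Icc 1 (w.length - u.length),
        Set.image2 DForest.cons (derivationTrees P x (w.take k))
          (derivationForests P u (w.drop k)) := by
  ext f
  simp only [Set.mem_iUnion, exists_prop]
  constructor
  · rintro ⟨hf, rfl⟩
    obtain ⟨t, g, rfl, hx, ht, hg⟩ := DForest.matches_inr_cons_iff.1 hf
    have ht_pos := ht.length_yield_pos hP
    have hg_len := hg.length_le_length_yield hP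
    rw [DForest.yield_cons]
    refine ⟨t.yield.length, ?_, t, ⟨hx, ht, by simp⟩, g, ⟨hg, by simp⟩, rfl⟩
    rw [Finset.mem_Icc, List.length_append]
    omega
  · rintro ⟨k, -, t, ⟨hx, ht, htw⟩, g, ⟨hg, hgw⟩, rfl⟩
    exact ⟨DForest.matches_inr_cons_iff.2 ⟨t, g, rfl, hx, ht, hg⟩, by
      rw [DForest.yield_cons, htw, hgw, List.take_append_drop]⟩

theorem pairwiseDisjoint_image_node (x : X) (s : Set (List (Δ ⊕ X)))
    (F : List (Δ ⊕ X) → Set (DForest Δ X)) :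
    s.PairwiseDisjoint fun u => DTree.node x u '' F u := by
  intro u _ v _ huv
  refine Set.disjoint_left.2 ?_
  rintro _ ⟨f, -, rfl⟩ ⟨g, -, hg⟩
  exact huv (DTree.node.inj hg).2.1.symm

theorem pairwiseDisjoint_image2_cons (x : X) (w : List Δ) (F : ℕ → Set (DForest Δ X)) :
    (Set.Iic w.length).PairwiseDisjoint fun k =>
      Set.image2 DForest.cons (derivationTrees P x (w.take k)) (F k) := by
  intro k hk l hl hkl
  refine Set.disjoint_left.2 ?_
  rintro _ ⟨t, ⟨-, -, htk⟩, _, -, rfl⟩ ⟨t', ⟨-, -, htl⟩, _, -, h⟩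
  have htake : w.take k = w.take l := by rw [← htk, ← htl, (DForest.cons.inj h).1]
  have hlen := congrArg List.length htake
  rw [List.length_take_of_le hk, List.length_take_of_le hl] at hlen
  exact hkl hlen

theorem finite_derivationTrees_and_derivationForests
    (hfin : ∀ x, (Function.support (P x)).Finite) (hP : IsProper P) :
    (∀ x w, (derivationTrees P x w).Finite) ∧ ∀ u w, (derivationForests P u w).Finite := by
  refine hP.induction ?_ ?_ ?_ ?_
  · intro x w ih
    rw [derivationTrees_eq_biUnion]
    exact (hfin x).biUnion fun u hu => (ih u hu).image _
  · rintro (_ | ⟨b, w⟩)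
    · rw [derivationForests_nil_nil]
      exact Set.finite_singleton _
    · rw [derivationForests_nil_cons]
      exact Set.finite_empty
  · intro a u w ih
    by_cases hw : ∃ v, w = a :: v
    · obtain ⟨v, rfl⟩ := hw
      rw [derivationForests_inl_cons_self]
      exact (ih v rfl).image _
    · rw [derivationForests_inl_cons_eq_empty u (not_exists.1 hw)]
      exact Set.finite_empty
  · intro x u w ih
    rw [derivationForests_inr_cons hP]
    exact (Finset.finite_toSet _).biUnion fun k hk => (ih k hk).1.image2 _ (ih k hk).2

/-- The series mapping `w` to the total weight of the derivation trees of `w` with root `x`. -/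
noncomputable def treeSeries (P : X → List (Δ ⊕ X) → K) (x : X) (w : List Δ) : K :=
  ∑ᶠ t ∈ derivationTrees P x w, t.wt P

/-- The series mapping `w` to the total weight of the derivation forests of `w` with sequence of
roots `u`. -/
noncomputable def forestSeries (P : X → List (Δ ⊕ X) → K) (u : List (Δ ⊕ X)) (w : List Δ) : K :=
  ∑ᶠ f ∈ derivationForests P u w, f.wt P

theorem treeSeries_nil (hP : IsProper P) (x : X) : treeSeries P x [] = 0 := by
  rw [treeSeries, derivationTrees_nil hP, finsum_mem_empty]

theorem treeSeries_eq_finsum_forestSeries (hfin : ∀ x, (Function.support (P x)).Finite)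
    (hP : IsProper P) (x : X) (w : List Δ) :
    treeSeries P x w = ∑ᶠ u, P x u * forestSeries P u w := by
  have hF := (finite_derivationTrees_and_derivationForests hfin hP).2
  calc treeSeries P x w
      = ∑ᶠ u ∈ Function.support (P x),
          ∑ᶠ t ∈ DTree.node x u '' derivationForests P u w, t.wt P := by
        rw [treeSeries, derivationTrees_eq_biUnion]
        exact finsum_mem_biUnion (pairwiseDisjoint_image_node x _ _) (hfin x)
          fun u _ => (hF u w).image _
    _ = ∑ᶠ u ∈ Function.support (P x), P x u * forestSeries P u w := by
        refine finsum_mem_congr rfl fun u _ => ?_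
        rw [finsum_mem_image fun f _ g _ h => (DTree.node.inj h).2.2, forestSeries,
          mul_finsum_mem' _ _ (hF u w)]
        rfl
    _ = ∑ᶠ u, P x u * forestSeries P u w := by
        have hsupp := Function.support_mul_subset_left (P x) (forestSeries P · w)
        exact (finsum_mem_inter_support_eq' _ _ _ fun u hu =>
          iff_of_true (hsupp hu) (Set.mem_univ u)).trans (finsum_mem_univ _)

theorem forestSeries_inr_cons (hfin : ∀ x, (Function.support (P x)).Finite) (hP : IsProper P)
    (x : X) (u : List (Δ ⊕ X)) (w : List Δ) :
    forestSeries P (.inr x :: u) w =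
      ∑ k ∈ Finset.Icc 1 (w.length - u.length),
        treeSeries P x (w.take k) * forestSeries P u (w.drop k) := by
  obtain ⟨hT, hF⟩ := finite_derivationTrees_and_derivationForests hfin hP
  have hdisj : (Finset.Icc 1 (w.length - u.length) : Set ℕ).PairwiseDisjoint fun k =>
      Set.image2 DForest.cons (derivationTrees P x (w.take k)) (derivationForests P u (w.drop k)) :=
    (pairwiseDisjoint_image2_cons x w _).subset fun k hk =>
      (Finset.mem_Icc.1 hk).2.trans (Nat.sub_le _ _)
  rw [forestSeries, derivationForests_inr_cons hP, ← finsum_mem_coe_finset]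
  refine (finsum_mem_biUnion hdisj (Finset.finite_toSet _) fun k _ =>
    (hT _ _).image2 _ (hF _ _)).trans (finsum_mem_congr rfl fun k _ => ?_)
  exact finsum_mem_image2_of_mul (hT _ _) (hF _ _) (fun _ _ _ _ h => DForest.cons.inj h)
    DForest.wt_cons

theorem forestSeries_eq_wordSeries (hfin : ∀ x, (Function.support (P x)).Finite)
    (hP : IsProper P) (u : List (Δ ⊕ X)) (w : List Δ) :
    forestSeries P u w = wordSeries (treeSeries P) u w := by
  induction u generalizing w with
  | nil =>
    rcases w with _ | ⟨b, w⟩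
    · simp [forestSeries, derivationForests_nil_nil, DForest.wt, wordSeries]
    · simp [forestSeries, derivationForests_nil_cons, wordSeries]
  | cons s u ih =>
    rcases s with a | x
    · by_cases hw : ∃ v, w = a :: v
      · obtain ⟨v, rfl⟩ := hw
        rw [wordSeries_inl_cons_self, ← ih, forestSeries, derivationForests_inl_cons_self,
          finsum_mem_image fun f _ g _ h => (DForest.cons.inj h).2]
        simp only [forestSeries, DForest.wt]
      · rw [not_exists] at hw
        rw [wordSeries_inl_cons_eq_zero _ u hw, forestSeries,
          derivationForests_inl_cons_eq_empty u hw, finsum_mem_empty]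
    · simp only [forestSeries_inr_cons hfin hP, wordSeries_inr_cons (treeSeries_nil hP), ih]

theorem isSolution_treeSeries (hfin : ∀ x, (Function.support (P x)).Finite) (hP : IsProper P) :
    IsSolution P (treeSeries P) := by
  intro x w
  simp only [treeSeries_eq_finsum_forestSeries hfin hP, forestSeries_eq_wordSeries hfin hP]

theorem solution_eq_sum_of_derivation_tree_weights_general
    (P : X → List (Δ ⊕ X) → K) (hfin : ∀ x, (Function.support (P x)).Finite) (hP : IsProper P)
    (S : X → List Δ → K) (hS : IsSolution P S) (hS0 : ∀ x, S x [] = 0) (x : X) (w : List Δ) :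
    S x w =
      ∑ᶠ (t : DTree Δ X) (_ : t.rootVar = some x ∧ t.Valid P ∧ t.yield = w), t.wt P :=
  congrFun₂ (hS.eq_of_quasiregular hP (isSolution_treeSeries hfin hP) hS0 (treeSeries_nil hP)) x w

end DerivationTrees

/-- **Lemma (Mathissen).** For a proper algebraic system with unique
quasiregular solution `(S_X)`, the value `(S_X, w)` equals the sum of the
weights of all derivation trees of `w` under the underlying grammar `G_X`. -/
theorem solution_eq_sum_of_derivation_tree_weights
    (K Δ X : Type) [CommSemiring K] [Fintype X]
    (P : X → List (Δ ⊕ X) → K) (hfin : ∀ x, (Function.support (P x)).Finite)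
    (hproper : IsProper P)
    (Sol : X → List Δ → K) (hsol : IsSolution P Sol)
    (hqr : ∀ x, Sol x [] = 0) :
    ∀ (x : X) (w : List Δ),
      Sol x w =
        ∑ᶠ (t : DTree Δ X)
          (_ : t.rootVar = some x ∧ t.Valid P ∧ t.yield = w), t.wt P :=
  solution_eq_sum_of_derivation_tree_weights_general P hfin hproper Sol hsol hqr
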